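/- Let A be a finite-dimensional left Leibniz algebra over a field F of characteristic zero and let M be a nilpotent subinvariant subalgebra of A. Then M ⊆ nilrad(A). -/

import Mathlib

open Submodule

section LeibnizDefs

variable {F : Type*} {A : Type*} [Field F] [AddCommGroup A] [Module F A]

/-- The span of all products `b*c` with `b ∈ B`, `c ∈ C`. -/
def mulSub (mul : A →ₗ[F] A →ₗ[F] A) (B C : Submodule F A) : Submodule F A :=
  Submodule.span F {z : A | ∃ b ∈ B, ∃ c ∈ C, mul b c = z}

/-- `fSub mul B C = B·C + C·B`, the function `f(B,C)`. -/
def fSub (mul : A →ₗ[F] A →ₗ[F] A) (B C : Submodule F A) : Submodule F A :=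
  mulSub mul B C ⊔ mulSub mul C B

/-- `fIter mul B C n = f^{n+1}(B,C)` (so index `0` is `f^1(B,C) = f(B,C)`). -/
def fIter (mul : A →ₗ[F] A →ₗ[F] A) (B C : Submodule F A) : ℕ → Submodule F A
  | 0 => fSub mul B C
  | n + 1 => fSub mul B (fIter mul B C n)

/-- `lcs mul B n = B^{n+1}`, the lower central series (index `0` is `B^1 = B`). -/
def lcs (mul : A →ₗ[F] A →ₗ[F] A) (B : Submodule F A) : ℕ → Submodule F A
  | 0 => B
  | n + 1 => mulSub mul B (lcs mul B n)

/-- `ds mul B n = B^{(n+1)}`, the derived series (index `0` is `B^{(1)} = B`). -/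
def ds (mul : A →ₗ[F] A →ₗ[F] A) (B : Submodule F A) : ℕ → Submodule F A
  | 0 => B
  | n + 1 => mulSub mul (ds mul B n) (ds mul B n)

/-- `B^ω = ⋂_{i ≥ 1} B^i`. -/
def omegaSub (mul : A →ₗ[F] A →ₗ[F] A) (B : Submodule F A) : Submodule F A :=
  ⨅ n, lcs mul B n

/-- `B` is a subalgebra: a subspace closed under multiplication. -/
def IsSubalg (mul : A →ₗ[F] A →ₗ[F] A) (B : Submodule F A) : Prop :=
  ∀ x ∈ B, ∀ y ∈ B, mul x y ∈ B

/-- `I` is an ideal of the subalgebra `S`: `I ⊆ S` and `xI + Ix ⊆ I` for all `x ∈ S`. -/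
def IsIdealIn (mul : A →ₗ[F] A →ₗ[F] A) (I S : Submodule F A) : Prop :=
  I ≤ S ∧ ∀ x ∈ S, ∀ y ∈ I, mul x y ∈ I ∧ mul y x ∈ I

/-- `B` is subinvariant in `S`: there is a chain of subalgebras
`B = c 0 ⊆ c 1 ⊆ ⋯ ⊆ c t = S` with each term an ideal of the next. -/
def IsSubinvariantIn (mul : A →ₗ[F] A →ₗ[F] A) (B S : Submodule F A) : Prop :=
  ∃ (t : ℕ) (c : ℕ → Submodule F A), c 0 = B ∧ c t = S ∧
    (∀ i ≤ t, IsSubalg mul (c i)) ∧ ∀ i < t, IsIdealIn mul (c i) (c (i + 1))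

/-- `B` is nilpotent: `B^m = 0` for some `m`. -/
def IsNilpotentSub (mul : A →ₗ[F] A →ₗ[F] A) (B : Submodule F A) : Prop :=
  ∃ m, lcs mul B m = ⊥

/-- `B` is solvable: `B^{(m)} = 0` for some `m`. -/
def IsSolvableSub (mul : A →ₗ[F] A →ₗ[F] A) (B : Submodule F A) : Prop :=
  ∃ m, ds mul B m = ⊥

/-- The centralizer `Z_A(B) = {x : xb = 0 = bx for all b ∈ B}`. -/
def centralizerSet (mul : A →ₗ[F] A →ₗ[F] A) (B : Submodule F A) : Set A :=
  {x : A | ∀ b ∈ B, mul x b = 0 ∧ mul b x = 0}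

/-- `R` is the radical (the maximal solvable ideal) of the subalgebra `S`. -/
def IsRadicalIn (mul : A →ₗ[F] A →ₗ[F] A) (S R : Submodule F A) : Prop :=
  IsIdealIn mul R S ∧ IsSolvableSub mul R ∧
    ∀ T, IsIdealIn mul T S → IsSolvableSub mul T → T ≤ R

/-- `N` is the nilradical (the maximal nilpotent ideal) of the subalgebra `S`. -/
def IsNilradicalIn (mul : A →ₗ[F] A →ₗ[F] A) (S N : Submodule F A) : Prop :=
  IsIdealIn mul N S ∧ IsNilpotentSub mul N ∧
    ∀ T, IsIdealIn mul T S → IsNilpotentSub mul T → T ≤ N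

/-- `H` is a Cartan subalgebra: a nilpotent self-normalizing subalgebra. -/
def IsCartan (mul : A →ₗ[F] A →ₗ[F] A) (H : Submodule F A) : Prop :=
  IsSubalg mul H ∧ IsNilpotentSub mul H ∧
    ∀ x : A, (∀ h ∈ H, mul x h ∈ H ∧ mul h x ∈ H) → x ∈ H

/-- The subalgebra generated by a set: the smallest subalgebra containing it. -/
def subalgGen (mul : A →ₗ[F] A →ₗ[F] A) (s : Set A) : Submodule F A :=
  sInf {S : Submodule F A | IsSubalg mul S ∧ s ⊆ (S : Set A)}

end LeibnizDefs

/-!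
For a subspace `B` of `A` let `E(B)` be the associative algebra generated by the left
multiplications `L_b`, `b ∈ B`, on `A`, and let `R(B)` be the radical of the trace form on `E(B)`.
In characteristic zero `R(B)` is nilpotent, and since the trace form is invariant it is stable under
every commutator `[g, ·]` that preserves `E(B)`. If `I` is an ideal of `S`, then
`[L_s, L_x] = L_{sx}` shows that `L_s R(I) ⊆ R(I) L_s + R(I)` for `s ∈ S`. Hence
`E(S) R(I) ⊆ R(I) E(S)`, so `E(S) R(I)` is nilpotent and consists of operators of trace zero; that
is, `R(I) ⊆ R(S)`.

The chain from `M` up to `A`, continued by the lower central series of `M`, is a flag on which the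
`L_x`, `x ∈ M`, act strictly downwards, so `L_x ∈ R(M) ⊆ R(A)`. Finally `{x | L_x ∈ R(A)}` is a
nilpotent ideal of `A` containing `M`.
-/

section Ring

open Polynomial in
theorem exists_isIdempotentElem_aeval_X_mul {F B : Type*} [Field F] [Ring B] [Algebra F B] {y : B}
    (hy : IsIntegral F y) :
    ∃ (p : F[X]) (n : ℕ),
      IsIdempotentElem (aeval y (X * p)) ∧ y ^ n * aeval y (X * p) = y ^ n := by
  obtain ⟨q, hq, hXq⟩ :=
    exists_eq_pow_rootMultiplicity_mul_and_not_dvd (minpoly F y) (minpoly.ne_zero hy) 0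
  set n := (minpoly F y).rootMultiplicity 0
  rw [map_zero, sub_zero] at hq hXq
  -- The idempotent is `u(y) * y ^ (n + 1)`, the projection onto the part of `y` that is invertible.
  obtain ⟨u, v, huv⟩ : IsCoprime (X ^ (n + 1)) q :=
    (irreducible_X.coprime_iff_not_dvd.2 hXq).pow_left
  have aeval_eq_zero (r : F[X]) : aeval y (r * (X ^ n * q)) = 0 := by
    rw [← hq, map_mul, minpoly.aeval, mul_zero]
  refine ⟨u * X ^ n, n, ?_, ?_⟩
  · have : X * (u * X ^ n) * (X * (u * X ^ n)) =
        X * (u * X ^ n) - u * v * X * (X ^ n * q) := by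
      linear_combination (X * u * X ^ n) * huv
    rw [IsIdempotentElem, ← map_mul, this, map_sub, aeval_eq_zero, sub_zero]
  · have : X ^ n * (X * (u * X ^ n)) = X ^ n - v * (X ^ n * q) := by
      linear_combination X ^ n * huv
    rw [← aeval_X_pow (R := F), ← map_mul, this, map_sub, aeval_eq_zero, sub_zero]

theorem isNilpotent_ideal_of_forall_isNilpotent {B : Type*} [Ring B] [IsArtinianRing B]
    {I : Ideal B} (hI : ∀ x ∈ I, IsNilpotent x) : IsNilpotent I := by
  have le_jacobson : I ≤ Ideal.jacobson ⊥ := by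
    intro x hx
    rw [Ideal.mem_jacobson_iff]
    intro y
    obtain ⟨z, hz⟩ := (hI _ (I.mul_mem_left y hx)).isUnit_add_one.exists_left_inv
    refine ⟨z, ?_⟩
    rw [Ideal.mem_bot, mul_assoc, sub_eq_zero, ← hz, mul_add, mul_one]
  obtain ⟨n, hn⟩ := IsArtinianRing.isNilpotent_jacobson_bot (R := B)
  exact ⟨n, le_bot_iff.1 ((Ideal.pow_right_mono le_jacobson n).trans_eq hn)⟩

variable {R B : Type*} [CommRing R] [Ring B] [Algebra R B]

theorem isNilpotent_submodule_of_forall_isNilpotent (E : Subalgebra R B) [IsArtinianRing E]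
    {N : Submodule R B} (hNE : N ≤ E.toSubmodule) (hmul : E.toSubmodule * N ≤ N)
    (hN : ∀ x ∈ N, IsNilpotent x) : IsNilpotent N := by
  let I : Ideal E :=
    { N.comap E.val.toLinearMap with
      smul_mem' := fun a _ hx ↦ hmul (mul_mem_mul a.2 hx) }
  have map_I : (I.restrictScalars R).map E.val.toLinearMap = N :=
    map_comap_eq_of_le fun x hx ↦ ⟨⟨x, hNE hx⟩, rfl⟩
  obtain ⟨n, hn⟩ : IsNilpotent I := isNilpotent_ideal_of_forall_isNilpotent fun x hx ↦
    (IsNilpotent.map_iff (f := E.val) Subtype.val_injective).1 (hN x hx)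
  refine ⟨n + 1, ?_⟩
  rw [← map_I, ← Submodule.map_pow, ← restrictScalars_pow n.succ_ne_zero, Submodule.pow_succ, hn]
  simp

theorem isNilpotent_mul_of_mul_le {E : Subalgebra R B} {N : Submodule R B} (hN : IsNilpotent N)
    (h : E.toSubmodule * N ≤ N * E.toSubmodule) : IsNilpotent (E.toSubmodule * N) := by
  have pow_le (n : ℕ) : (E.toSubmodule * N) ^ n ≤ N ^ n * E.toSubmodule := by
    induction n with
    | zero => simp
    | succ n ih =>
      calc (E.toSubmodule * N) ^ (n + 1)
          ≤ N ^ n * E.toSubmodule * (E.toSubmodule * N) := by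
            rw [pow_succ]; exact mul_le_mul_left ih _
        _ = N ^ n * (E.toSubmodule * N) := by
            rw [mul_assoc, ← mul_assoc E.toSubmodule, E.isIdempotentElem_toSubmodule.eq]
        _ ≤ N ^ n * (N * E.toSubmodule) := mul_le_mul_right h _
        _ = N ^ (n + 1) * E.toSubmodule := by rw [pow_succ, mul_assoc]
  obtain ⟨n, hn⟩ := hN
  exact ⟨n, le_bot_iff.1 ((pow_le n).trans_eq (by rw [hn, zero_mul, zero_eq_bot]))⟩

theorem adjoin_mul_le_mul_adjoin {S : Set B} {N : Submodule R B}
    (h : ∀ s ∈ S, ∀ x ∈ N, s * x ∈ N * (Algebra.adjoin R S).toSubmodule) :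
    (Algebra.adjoin R S).toSubmodule * N ≤ N * (Algebra.adjoin R S).toSubmodule := by
  set E := Algebra.adjoin R S
  have le_mul : N ≤ N * E.toSubmodule := le_mul_of_one_le_right' (one_le.2 E.one_mem)
  refine mul_le.2 fun a ha ↦ ?_
  induction ha using Algebra.adjoin_induction with
  | mem s hs => exact h s hs
  | algebraMap r =>
    intro x hx
    rw [← Algebra.smul_def]
    exact smul_mem _ r (le_mul hx)
  | add a b _ _ iha ihb =>
    intro x hx
    rw [add_mul]
    exact add_mem (iha x hx) (ihb x hx)
  | mul a b _ _ iha ihb =>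
    intro x hx
    rw [mul_assoc]
    refine Submodule.mul_induction_on (ihb x hx) (fun y hy e he ↦ ?_) fun y z hy hz ↦ ?_
    · rw [← mul_assoc, ← E.isIdempotentElem_toSubmodule.eq, ← mul_assoc N]
      exact mul_mem_mul (iha y hy) he
    · rw [mul_add]
      exact add_mem hy hz

theorem lie_mem_adjoin {S : Set B} {g : B} (hg : ∀ s ∈ S, ⁅g, s⁆ ∈ Algebra.adjoin R S) {a : B}
    (ha : a ∈ Algebra.adjoin R S) : ⁅g, a⁆ ∈ Algebra.adjoin R S := by
  induction ha using Algebra.adjoin_induction with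
  | mem s hs => exact hg s hs
  | algebraMap r =>
    rw [Commute.lie_eq (Algebra.commutes r g).symm]
    exact zero_mem _
  | add a b _ _ iha ihb =>
    simpa only [Ring.lie_def, mul_add, add_mul, add_sub_add_comm] using add_mem iha ihb
  | mul a b ha hb iha ihb =>
    have leibniz : ⁅g, a * b⁆ = ⁅g, a⁆ * b + a * ⁅g, b⁆ := by
      simp only [Ring.lie_def]; noncomm_ring
    rw [leibniz]
    exact add_mem (mul_mem iha hb) (mul_mem ha ihb)

end Ring

section TraceRadical

open LinearMap (trace)

variable {R V : Type*} [CommRing R] [AddCommGroup V] [Module R V]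

/-- The trace radical of an associative algebra `E` of endomorphisms: the radical of the trace form
`(a, b) ↦ trace (a * b)` on `E`, as a subspace of `Module.End R V`. When `V` is finite-dimensional
over a field of characteristic zero, this is the Jacobson radical of `E`. -/
def traceRadical (E : Subalgebra R (Module.End R V)) : Submodule R (Module.End R V) where
  carrier := {y | y ∈ E ∧ ∀ a ∈ E, trace R V (a * y) = 0}
  add_mem' hx hy := ⟨add_mem hx.1 hy.1, fun a ha ↦ by
    rw [mul_add, map_add, hx.2 a ha, hy.2 a ha, add_zero]⟩
  zero_mem' := ⟨zero_mem E, fun a _ ↦ by rw [mul_zero, map_zero]⟩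
  smul_mem' r y hy := ⟨E.smul_mem hy.1 r, fun a ha ↦ by
    rw [mul_smul_comm, map_smul, hy.2 a ha, smul_zero]⟩

namespace traceRadical

variable {E : Subalgebra R (Module.End R V)}

theorem le_toSubmodule : traceRadical E ≤ E.toSubmodule := fun _ hy ↦ hy.1

theorem toSubmodule_mul_le : E.toSubmodule * traceRadical E ≤ traceRadical E :=
  mul_le.2 fun a ha y hy ↦ ⟨mul_mem ha hy.1, fun b hb ↦ by
    rw [← mul_assoc]; exact hy.2 _ (mul_mem hb ha)⟩

theorem lie_mem {g y : Module.End R V} (hg : ∀ a ∈ E, ⁅g, a⁆ ∈ E) (hy : y ∈ traceRadical E) :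
    ⁅g, y⁆ ∈ traceRadical E :=
  ⟨hg y hy.1, fun a ha ↦ by
    have lie_skew : ⁅a, g⁆ = -⁅g, a⁆ := (neg_sub _ _).symm
    rw [← LinearMap.trace_lie_mul_eq, lie_skew, neg_mul, map_neg, hy.2 _ (hg a ha), neg_zero]⟩

end traceRadical

theorem le_traceRadical_of_isNilpotent [IsReduced R] {E : Subalgebra R (Module.End R V)}
    {N : Submodule R (Module.End R V)} (hN : IsNilpotent N) (hNE : N ≤ E.toSubmodule)
    (h : E.toSubmodule * N ≤ N * E.toSubmodule) : N ≤ traceRadical E := by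
  obtain ⟨n, hn⟩ := isNilpotent_mul_of_mul_le hN h
  refine fun y hy ↦ ⟨hNE hy, fun a ha ↦ ?_⟩
  have pow_eq_zero : (a * y) ^ n = 0 := by
    simpa [hn] using pow_mem_pow _ (mul_mem_mul (E.mem_toSubmodule.2 ha) hy) n
  exact (LinearMap.isNilpotent_trace_of_isNilpotent ⟨n, pow_eq_zero⟩).eq_zero

variable {F : Type*} [Field F] [CharZero F] [Module F V] [FiniteDimensional F V]

theorem isNilpotent_of_forall_trace_pow_succ_eq_zero {y : Module.End F V}
    (hy : ∀ k, trace F V (y ^ (k + 1)) = 0) : IsNilpotent y := by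
  obtain ⟨p, n, idem, pow_mul⟩ :=
    exists_isIdempotentElem_aeval_X_mul (Algebra.IsIntegral.isIntegral (R := F) y)
  have trace_eq_zero : trace F V (Polynomial.aeval y (Polynomial.X * p)) = 0 := by
    rw [map_mul, Polynomial.aeval_X, Polynomial.aeval_eq_sum_range, Finset.mul_sum, map_sum]
    simp only [mul_smul_comm, ← pow_succ', map_smul, hy, smul_zero, Finset.sum_const_zero]
  refine ⟨n, ?_⟩
  rw [← pow_mul, LinearMap.IsIdempotentElem.eq_zero_of_trace_eq_zero idem trace_eq_zero, mul_zero]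

theorem isNilpotent_traceRadical (E : Subalgebra F (Module.End F V)) :
    IsNilpotent (traceRadical E) := by
  have : IsArtinianRing E := IsArtinianRing.of_finite F E
  refine isNilpotent_submodule_of_forall_isNilpotent E traceRadical.le_toSubmodule
    traceRadical.toSubmodule_mul_le fun y hy ↦
      isNilpotent_of_forall_trace_pow_succ_eq_zero fun k ↦ ?_
  rw [pow_succ]
  exact hy.2 _ (pow_mem hy.1 k)

theorem traceRadical_adjoin_le_of_lie_mem {S T : Set (Module.End F V)}
    (hST : S ⊆ T) (hT : ∀ g ∈ T, ∀ s ∈ S, ⁅g, s⁆ ∈ S) :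
    traceRadical (Algebra.adjoin F S) ≤ traceRadical (Algebra.adjoin F T) := by
  refine le_traceRadical_of_isNilpotent (isNilpotent_traceRadical _)
    (traceRadical.le_toSubmodule.trans (Algebra.adjoin_mono hST))
    (adjoin_mul_le_mul_adjoin fun g hg y hy ↦ ?_)
  have lie_adjoin : ∀ a ∈ Algebra.adjoin F S, ⁅g, a⁆ ∈ Algebra.adjoin F S :=
    fun _ ↦ lie_mem_adjoin fun s hs ↦ Algebra.subset_adjoin (hT g hg s hs)
  have lie_mem : ⁅g, y⁆ ∈ traceRadical (Algebra.adjoin F S) := traceRadical.lie_mem lie_adjoin hy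
  have : g * y = y * g + ⁅g, y⁆ * 1 := by rw [Ring.lie_def]; noncomm_ring
  rw [this]
  exact add_mem (mul_mem_mul hy (Algebra.subset_adjoin hg))
    (mul_mem_mul lie_mem (Subalgebra.one_mem _))

end TraceRadical

section Leibniz

variable {F A : Type*} [Field F] [AddCommGroup A] [Module F A] {mul : A →ₗ[F] A →ₗ[F] A}
  {B C I S : Submodule F A}

theorem mulSub_eq_map_smul : mulSub mul B C = B.map mul • C := by
  refine le_antisymm (span_le.2 ?_) (smul_le.2 ?_)
  · rintro _ ⟨b, hb, c, hc, rfl⟩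
    exact smul_mem_smul (mem_map_of_mem hb) hc
  · rintro _ ⟨b, hb, rfl⟩ c hc
    exact subset_span ⟨b, hb, c, hc, rfl⟩

theorem lcs_eq_pow_smul (n : ℕ) : lcs mul B n = B.map mul ^ n • B := by
  induction n with
  | zero => rw [lcs, Submodule.pow_zero, Submodule.one_smul]
  | succ n ih => rw [lcs, mulSub_eq_map_smul, ih, ← Submodule.smul_assoc, smul_eq_mul, pow_succ']

theorem isNilpotentSub_of_isNilpotent_map (h : IsNilpotent (B.map mul)) :
    IsNilpotentSub mul B := by
  obtain ⟨n, hn⟩ := h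
  exact ⟨n, by rw [lcs_eq_pow_smul, hn, zero_eq_bot, bot_smul]⟩

namespace IsSubinvariantIn

theorem induction {P : Submodule F A → Prop} (h : IsSubinvariantIn mul B S) (base : P B)
    (step : ∀ I J, IsIdealIn mul I J → P I → P J) : P S := by
  obtain ⟨t, c, rfl, rfl, -, hideal⟩ := h
  have (i : ℕ) (hi : i ≤ t) : P (c i) := by
    induction i with
    | zero => exact base
    | succ i ih => exact step _ _ (hideal i hi) (ih (by lia))
  exact this t le_rfl

theorem exists_pow_smul_le (h : IsSubinvariantIn mul B S) : ∃ t, B.map mul ^ t • S ≤ B := by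
  suffices B ≤ S ∧ ∃ t, B.map mul ^ t • S ≤ B from this.2
  refine h.induction (P := fun J ↦ B ≤ J ∧ ∃ t, B.map mul ^ t • J ≤ B) ?_ ?_
  · exact ⟨le_rfl, 0, by rw [Submodule.pow_zero, Submodule.one_smul]⟩
  · rintro I J hIJ ⟨hBI, t, ht⟩
    have smul_le_I : B.map mul • J ≤ I := by
      refine smul_le.2 ?_
      rintro _ ⟨b, hb, rfl⟩ x hx
      exact (hIJ.2 x hx b (hBI hb)).2
    refine ⟨hBI.trans hIJ.1, t + 1, ?_⟩
    rw [pow_succ, ← smul_eq_mul, Submodule.smul_assoc]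
    exact (smul_mono le_rfl smul_le_I).trans ht

theorem isNilpotent_map (h : IsSubinvariantIn mul B ⊤) (hB : IsNilpotentSub mul B) :
    IsNilpotent (B.map mul) := by
  obtain ⟨t, ht⟩ := h.exists_pow_smul_le
  obtain ⟨n, hn⟩ := hB
  have pow_smul_top : B.map mul ^ (n + t) • (⊤ : Submodule F A) ≤ ⊥ := by
    rw [pow_add, ← smul_eq_mul, Submodule.smul_assoc, ← hn, lcs_eq_pow_smul]
    exact smul_mono le_rfl ht
  refine ⟨n + t, (Submodule.eq_bot_iff _).2 fun f hf ↦ LinearMap.ext fun x ↦ ?_⟩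
  exact (mem_bot F).1 (pow_smul_top (smul_mem_smul hf mem_top))

end IsSubinvariantIn

/-- The associative algebra of endomorphisms of the whole of `A` generated by the identity and the
left multiplications `mul b` with `b ∈ B`. -/
abbrev leftMulAlgebra (mul : A →ₗ[F] A →ₗ[F] A) (B : Submodule F A) :
    Subalgebra F (Module.End F A) :=
  Algebra.adjoin F (B.map mul : Set (Module.End F A))

theorem map_le_leftMulAlgebra : B.map mul ≤ (leftMulAlgebra mul B).toSubmodule :=
  Algebra.subset_adjoin

theorem map_le_traceRadical_leftMulAlgebra (h : IsNilpotent (B.map mul)) :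
    B.map mul ≤ traceRadical (leftMulAlgebra mul B) :=
  le_traceRadical_of_isNilpotent h map_le_leftMulAlgebra <|
    adjoin_mul_le_mul_adjoin fun _ hs _ hx ↦ mul_mem_mul hs (map_le_leftMulAlgebra hx)

theorem mul_mul_eq_lie (hleib : ∀ x y z, mul x (mul y z) = mul (mul x y) z + mul y (mul x z))
    (x y : A) : mul (mul x y) = ⁅mul x, mul y⁆ := by
  ext z
  rw [Ring.lie_def, LinearMap.sub_apply, Module.End.mul_apply, Module.End.mul_apply, hleib,
    add_sub_cancel_right]

theorem traceRadical_leftMulAlgebra_le_of_isIdealIn [CharZero F] [FiniteDimensional F A]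
    (hleib : ∀ x y z, mul x (mul y z) = mul (mul x y) z + mul y (mul x z))
    (h : IsIdealIn mul I S) :
    traceRadical (leftMulAlgebra mul I) ≤ traceRadical (leftMulAlgebra mul S) := by
  refine traceRadical_adjoin_le_of_lie_mem (map_mono h.1) ?_
  rintro _ ⟨x, hx, rfl⟩ _ ⟨y, hy, rfl⟩
  exact ⟨mul x y, (h.2 x hx y hy).1, mul_mul_eq_lie hleib x y⟩

theorem isIdealIn_comap_traceRadical
    (hleib : ∀ x y z, mul x (mul y z) = mul (mul x y) z + mul y (mul x z)) :
    IsIdealIn mul ((traceRadical (leftMulAlgebra mul ⊤)).comap mul) ⊤ := by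
  refine ⟨le_top, fun x _ y hy ↦ ?_⟩
  have hx : mul x ∈ leftMulAlgebra mul ⊤ := map_le_leftMulAlgebra (mem_map_of_mem mem_top)
  have lie_mem : ⁅mul x, mul y⁆ ∈ traceRadical (leftMulAlgebra mul ⊤) :=
    traceRadical.lie_mem (fun a ha ↦ sub_mem (mul_mem hx ha) (mul_mem ha hx)) hy
  have lie_skew : ⁅mul y, mul x⁆ = -⁅mul x, mul y⁆ := (neg_sub _ _).symm
  simp only [mem_comap, mul_mul_eq_lie hleib, lie_skew, neg_mem_iff, and_self, lie_mem]

theorem isNilpotentSub_comap_traceRadical [CharZero F] [FiniteDimensional F A]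
    (E : Subalgebra F (Module.End F A)) : IsNilpotentSub mul ((traceRadical E).comap mul) := by
  obtain ⟨n, hn⟩ := isNilpotent_traceRadical E
  refine isNilpotentSub_of_isNilpotent_map ⟨n, le_bot_iff.1 ?_⟩
  exact (pow_le_pow_left' (map_comap_le mul _) n).trans_eq hn

end Leibniz

/-- over characteristic zero, a nilpotent subinvariant subalgebra
is contained in the nilradical. -/
theorem stmt_14 {F A : Type*} [Field F] [CharZero F]
    [AddCommGroup A] [Module F A] [FiniteDimensional F A]
    (mul : A →ₗ[F] A →ₗ[F] A)
    (hleib : ∀ x y z : A, mul x (mul y z) = mul (mul x y) z + mul y (mul x z))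
    (M N : Submodule F A)
    (hM : IsSubinvariantIn mul M ⊤) (hnil : IsNilpotentSub mul M)
    (hN : IsNilradicalIn mul ⊤ N) :
    M ≤ N := by
  have map_le : M.map mul ≤ traceRadical (leftMulAlgebra mul ⊤) :=
    hM.induction (P := fun S ↦ M.map mul ≤ traceRadical (leftMulAlgebra mul S))
      (map_le_traceRadical_leftMulAlgebra (hM.isNilpotent_map hnil))
      fun _ _ hIJ ih ↦ ih.trans (traceRadical_leftMulAlgebra_le_of_isIdealIn hleib hIJ)
  exact (map_le_iff_le_comap.1 map_le).trans <|
    hN.2.2 _ (isIdealIn_comap_traceRadical hleib) (isNilpotentSub_comap_traceRadical _)
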